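/- arXiv:0802.1401 — 2 statements merged into one kernel-verified Lean document; each statement's English description precedes it below -/
import Mathlib

section
/- Let b = 0.8 and a = 0.5, so u(1) = 0.5 and u(n+1) = 0.4·sin(π·u(n)) + u(n) + 0.8 for all n ≥ 1. Then there exists a sequence v : ℕ → ℝ with v(n+10) = v(n) + 8 for all n ≥ 1 such that u(n) − v(n) → 0 as n → ∞; that is, u is attracted by a stable periodic helix of period 10 and modulo 8. -/
open Filter

/-!
The map `f x = 0.4 sin (π x) + x + 0.8` commutes with translation by `8`, so helices of period `10`
and modulo `8` that are orbits of `f` are the fixed points of the return map `f^[10] - 8`, and an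
orbit is attracted by such a helix as soon as the iterates of the return map along it converge.
Validated rational arithmetic, carrying a centre, a radius and a Lipschitz constant along the orbit,
shows that the return map is a contraction of the closed ball of radius `4 / 10 ^ 4` around
`0.060274`, and that its tenth iterate sends `0.5` into this ball.
-/

open Function Metric Set Topology

section ReturnMap

/-- The return map of `f` after `p` steps modulo `m`. If `f` commutes with translation by `m`, the
fixed points are the initial values of the `f`-orbits that are periodic helices with period `p` and
modulo `m`. -/
def returnMap {G : Type*} [Sub G] (f : G → G) (p : ℕ) (m x : G) : G :=
  f^[p] x - m

theorem iterate_add_nsmul {M : Type*} [AddMonoid M] {f : M → M} {m : M}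
    (hf : ∀ y, f (y + m) = f y + m) (n k : ℕ) (y : M) : f^[n] (y + k • m) = f^[n] y + k • m := by
  have hcomm : Function.Commute f (· + m) := hf
  simpa only [add_right_iterate] using hcomm.iterate_iterate n k y

variable {G : Type*} [AddGroup G] {f : G → G} {m x : G}

theorem returnMap_iterate (hf : ∀ y, f (y + m) = f y + m) (p k : ℕ) (y : G) :
    (returnMap f p m)^[k] y = f^[p * k] y - k • m := by
  rw [eq_sub_iff_add_eq]
  induction k with
  | zero => simp
  | succ k ih =>
    rw [iterate_succ_apply', returnMap, succ_nsmul', ← add_assoc, sub_add_cancel,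
      ← iterate_add_nsmul hf, ih, ← iterate_add_apply, mul_add_one, add_comm]

theorem iterate_add_eq_of_isFixedPt_returnMap (hf : ∀ y, f (y + m) = f y + m) {p : ℕ}
    (hx : IsFixedPt (returnMap f p m) x) (n : ℕ) : f^[n + p] x = f^[n] x + m := by
  have hper : f^[p] x = x + m := sub_eq_iff_eq_add.mp hx
  rw [iterate_add_apply, hper]
  simpa only [one_nsmul] using iterate_add_nsmul hf n 1 x

variable [TopologicalSpace G] [IsTopologicalAddGroup G]

theorem tendsto_iterate_sub_iterate_of_tendsto_returnMap (hcont : Continuous f)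
    (hf : ∀ y, f (y + m) = f y + m) {p : ℕ} (hp : p ≠ 0) {a : G}
    (hx : IsFixedPt (returnMap f p m) x)
    (hlim : Tendsto (fun k => (returnMap f p m)^[k] a) atTop (𝓝 x)) :
    Tendsto (fun n => f^[n] a - f^[n] x) atTop (𝓝 0) := by
  have iterate_mul_add (i k : ℕ) (y : G) :
      f^[p * k + i] y = f^[i] ((returnMap f p m)^[k] y) + k • m := by
    rw [returnMap_iterate hf, ← iterate_add_nsmul hf, sub_add_cancel, ← iterate_add_apply, add_comm]
  have residue_lim (i : ℕ) :
      Tendsto (fun k => f^[p * k + i] a - f^[p * k + i] x) atTop (𝓝 0) := by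
    simp only [iterate_mul_add, add_sub_add_right_eq_sub, (hx.iterate _).eq]
    simpa only [sub_self, comp_apply] using
      (((hcont.iterate i).tendsto x).comp hlim).sub_const (f^[i] x)
  refine tendsto_def.mpr fun U hU => ?_
  have all_residues : ∀ᶠ k in atTop, ∀ i ∈ Finset.range p,
      f^[p * k + i] a - f^[p * k + i] x ∈ U :=
    (eventually_all_finset _).mpr fun i _ => residue_lim i hU
  filter_upwards [(Nat.tendsto_div_const_atTop hp).eventually all_residues] with n hn
  simpa only [Nat.div_add_mod, mem_preimage] using
    hn (n % p) (Finset.mem_range.mpr (Nat.mod_lt n (Nat.pos_of_ne_zero hp)))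

end ReturnMap

theorem exists_isFixedPt_tendsto_iterate_of_mapsTo {α : Type*} [MetricSpace α] [CompleteSpace α]
    {s : Set α} (hs : IsClosed s) {g : α → α} (hmaps : MapsTo g s s) {K : ℝ} (hK : K < 1)
    (hlip : ∀ x ∈ s, ∀ y ∈ s, dist (g x) (g y) ≤ K * dist x y) {x : α} (hx : x ∈ s) :
    ∃ y, IsFixedPt g y ∧ Tendsto (fun n => g^[n] x) atTop (𝓝 y) := by
  have hlip' : LipschitzOnWith K.toNNReal g s := .of_dist_le_mul fun x hx y hy =>
    (hlip x hx y hy).trans (by gcongr; exact Real.le_coe_toNNReal K)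
  have hcontr : ContractingWith K.toNNReal (hmaps.restrict g s s) :=
    ⟨Real.toNNReal_lt_one.mpr hK, hlip'.mapsToRestrict hmaps⟩
  obtain ⟨y, -, hfix, hlim, -⟩ :=
    hcontr.exists_fixedPoint' hs.isComplete hmaps hx (edist_ne_top _ _)
  exact ⟨y, hfix, hlim⟩

section SineApproximation

theorem taylorWithinEval_sin_zero {s : Set ℝ} (hs : UniqueDiffOn ℝ s) (h0 : (0 : ℝ) ∈ s)
    (n : ℕ) (x : ℝ) : taylorWithinEval Real.sin (2 * n) s 0 x =
      ∑ k ∈ Finset.range n, (-1) ^ k * x ^ (2 * k + 1) / (2 * k + 1).factorial := by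
  have deriv_zero (k : ℕ) : iteratedDerivWithin k Real.sin s 0 = iteratedDeriv k Real.sin 0 :=
    iteratedDerivWithin_eq_iteratedDeriv hs Real.contDiff_sin.contDiffAt h0
  induction n with
  | zero => simp
  | succ n ih =>
    have deriv_even : iteratedDeriv (2 * n + 1 + 1) Real.sin 0 = 0 := by simp
    have deriv_odd : iteratedDeriv (2 * n + 1) Real.sin 0 = (-1) ^ n := by simp
    rw [mul_add_one, taylorWithinEval_succ, taylorWithinEval_succ, ih, deriv_zero, deriv_zero,
      deriv_even, deriv_odd, Finset.sum_range_succ, Nat.factorial_succ, sub_zero, smul_zero,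
      add_zero, smul_eq_mul]
    push_cast
    ring

theorem abs_sin_sub_taylor_le (x : ℝ) (n : ℕ) :
    |Real.sin x - ∑ k ∈ Finset.range n, (-1) ^ k * x ^ (2 * k + 1) / (2 * k + 1).factorial| ≤
      |x| ^ (2 * n + 1) / (2 * n + 1).factorial := by
  rcases eq_or_ne 0 x with rfl | hx
  · simp
  obtain ⟨y, -, hy⟩ := taylor_mean_remainder_lagrange_iteratedDeriv (n := 2 * n) hx
    Real.contDiff_sin.contDiffOn
  rw [← taylorWithinEval_sin_zero (uniqueDiffOn_uIcc hx) left_mem_uIcc, hy, sub_zero, abs_div,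
    abs_mul, abs_pow, Nat.abs_cast]
  gcongr
  exact mul_le_of_le_one_left (by positivity) (Real.abs_iteratedDeriv_sin_le_one _ _)

/-- A rational approximation of `π`. -/
def piApprox : ℚ := 31415926536 / 10 ^ 10

theorem abs_pi_sub_piApprox_le : |Real.pi - piApprox| ≤ 1 / 10 ^ 10 := by
  have lower := Real.pi_gt_d20
  have upper := Real.pi_lt_d20
  rw [piApprox, abs_le]
  push_cast
  constructor <;> linarith

theorem abs_piApprox_le : |(piApprox : ℝ)| ≤ 3.15 := by
  norm_num [piApprox, abs_of_pos]

/-- A rational approximation of `sin (π q)`: a Taylor polynomial, evaluated after reducing `q`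
modulo `2` to `[-1, 1]`. -/
def sinPiApprox (q : ℚ) : ℚ :=
  ∑ k ∈ Finset.range 10,
    (-1) ^ k * (piApprox * (q - 2 * round (q / 2))) ^ (2 * k + 1) / (2 * k + 1).factorial

theorem abs_sub_two_mul_round_le {k : Type*} [Field k] [LinearOrder k] [IsStrictOrderedRing k]
    [FloorRing k] (q : k) : |q - 2 * round (q / 2)| ≤ 1 := by
  have h := abs_sub_round (q / 2)
  rw [abs_le] at h ⊢
  constructor <;> linarith

theorem abs_sin_pi_mul_sub_sinPiApprox_le (q : ℚ) :
    |Real.sin (Real.pi * q) - sinPiApprox q| ≤ 1 / 10 ^ 9 := by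
  set ρ : ℚ := q - 2 * round (q / 2) with hρ
  have abs_ρ : |(ρ : ℝ)| ≤ 1 := by
    have h := abs_sub_two_mul_round_le q
    rw [← hρ] at h
    exact_mod_cast h
  have periodic : Real.sin (Real.pi * q) = Real.sin (Real.pi * ρ) := by
    rw [← Real.sin_sub_int_mul_two_pi _ (round (q / 2)), hρ]
    push_cast
    ring_nf
  have pi_error : |Real.sin (Real.pi * ρ) - Real.sin (piApprox * ρ)| ≤ 1 / 10 ^ 10 :=
    calc |Real.sin (Real.pi * ρ) - Real.sin (piApprox * ρ)|
        ≤ |Real.pi - piApprox| * |(ρ : ℝ)| := by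
          rw [← abs_mul, sub_mul]; exact Real.abs_sin_sub_sin_le _ _
      _ ≤ 1 / 10 ^ 10 * 1 := by gcongr; exact abs_pi_sub_piApprox_le
      _ = 1 / 10 ^ 10 := mul_one _
  have taylor_error : |Real.sin (piApprox * ρ) - sinPiApprox q| ≤ 6 / 10 ^ 10 :=
    calc |Real.sin (piApprox * ρ) - sinPiApprox q|
        ≤ |(piApprox * ρ : ℝ)| ^ (2 * 10 + 1) / (2 * 10 + 1).factorial := by
          rw [sinPiApprox, ← hρ]
          exact_mod_cast abs_sin_sub_taylor_le (piApprox * ρ) 10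
      _ ≤ (3.15 * 1) ^ (2 * 10 + 1) / (2 * 10 + 1).factorial := by
          rw [abs_mul]; gcongr; exact abs_piApprox_le
      _ ≤ 6 / 10 ^ 10 := by norm_num [Nat.factorial]
  rw [periodic]
  linarith [abs_sub_le (Real.sin (Real.pi * ρ)) (Real.sin (piApprox * ρ)) (sinPiApprox q)]

theorem abs_pi_mul_cos_sub_le (q : ℚ) :
    |Real.pi * Real.cos (Real.pi * q) - piApprox * sinPiApprox (q + 1 / 2)| ≤ 1 / 10 ^ 8 := by
  have cos_error : |Real.cos (Real.pi * q) - sinPiApprox (q + 1 / 2)| ≤ 1 / 10 ^ 9 := by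
    have h := abs_sin_pi_mul_sub_sinPiApprox_le (q + 1 / 2)
    push_cast at h
    rwa [mul_add, mul_one_div, Real.sin_add_pi_div_two] at h
  calc |Real.pi * Real.cos (Real.pi * q) - piApprox * sinPiApprox (q + 1 / 2)|
      = |(Real.pi - piApprox) * Real.cos (Real.pi * q)
          + piApprox * (Real.cos (Real.pi * q) - sinPiApprox (q + 1 / 2))| := by ring_nf
    _ ≤ 1 / 10 ^ 10 * 1 + 3.15 * (1 / 10 ^ 9) := by
        refine (abs_add_le _ _).trans ?_
        rw [abs_mul, abs_mul]
        gcongr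
        exacts [abs_pi_sub_piApprox_le, Real.abs_cos_le_one _, abs_piApprox_le]
    _ ≤ 1 / 10 ^ 8 := by norm_num

end SineApproximation

section HelixMap

/-- The map `f_b` whose orbits are the sequences `u_a`. -/
noncomputable def helixMap (b x : ℝ) : ℝ := 0.4 * Real.sin (Real.pi * x) + x + b

theorem hasDerivAt_helixMap (b x : ℝ) :
    HasDerivAt (helixMap b) (1 + 0.4 * (Real.pi * Real.cos (Real.pi * x))) x := by
  have h := ((((hasDerivAt_id x).const_mul Real.pi).sin.const_mul 0.4).add
    (hasDerivAt_id x)).add_const b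
  convert! h using 1
  simp only [id]
  ring

theorem continuous_helixMap (b : ℝ) : Continuous (helixMap b) :=
  continuous_iff_continuousAt.mpr fun x => (hasDerivAt_helixMap b x).continuousAt

theorem helixMap_add_two_mul_int (b x : ℝ) (j : ℤ) :
    helixMap b (x + 2 * j) = helixMap b x + 2 * j := by
  have periodic : Real.sin (Real.pi * (x + 2 * j)) = Real.sin (Real.pi * x) := by
    rw [mul_add, ← Real.sin_add_int_mul_two_pi (Real.pi * x) j]
    ring_nf
  rw [helixMap, helixMap, periodic]
  ring

/-- A rational upper bound for `|f_b'|` on the closed ball of centre `q` and radius `r`: the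
approximate value at `q`, plus `4 * r` because `|f_b''| ≤ 0.4 π² ≤ 4`, plus the rounding error. -/
def slopeBound (q r : ℚ) : ℚ :=
  |1 + 2 / 5 * (piApprox * sinPiApprox (q + 1 / 2))| + 4 * r + 1 / 10 ^ 8

theorem slopeBound_nonneg {q r : ℚ} (hr : 0 ≤ r) : 0 ≤ slopeBound q r := by
  unfold slopeBound
  positivity

theorem abs_pi_mul_cos_sub_cos_le (x y : ℝ) :
    |Real.pi * (Real.cos (Real.pi * x) - Real.cos (Real.pi * y))| ≤ 10 * |x - y| :=
  calc |Real.pi * (Real.cos (Real.pi * x) - Real.cos (Real.pi * y))|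
      ≤ Real.pi * (Real.pi * |x - y|) := by
        rw [abs_mul, abs_of_pos Real.pi_pos]
        gcongr
        refine (Real.abs_cos_sub_cos_le _ _).trans_eq ?_
        rw [← mul_sub, abs_mul, abs_of_pos Real.pi_pos]
    _ = Real.pi ^ 2 * |x - y| := by ring
    _ ≤ 10 * |x - y| := by
        gcongr
        nlinarith [Real.pi_lt_d2, Real.pi_pos]

theorem abs_deriv_helixMap_le_slopeBound {q r : ℚ} {x : ℝ} (hx : |x - q| ≤ r) :
    |1 + 0.4 * (Real.pi * Real.cos (Real.pi * x))| ≤ slopeBound q r := by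
  set S : ℝ := piApprox * sinPiApprox (q + 1 / 2) with hS
  have cast_bound : (slopeBound q r : ℝ) = |1 + 0.4 * S| + 4 * r + 1 / 10 ^ 8 := by
    rw [slopeBound, hS]
    push_cast
    norm_num
  have center_error := abs_pi_mul_cos_sub_le q
  have variation := abs_pi_mul_cos_sub_cos_le x q
  have total : |0.4 * (Real.pi * Real.cos (Real.pi * x) - S)| ≤ 4 * r + 1 / 10 ^ 8 := by
    rw [mul_sub, abs_le] at variation
    rw [← hS, abs_le] at center_error
    rw [abs_le]
    constructor <;> linarith
  calc |1 + 0.4 * (Real.pi * Real.cos (Real.pi * x))|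
      = |1 + 0.4 * S + 0.4 * (Real.pi * Real.cos (Real.pi * x) - S)| := by ring_nf
    _ ≤ |1 + 0.4 * S| + (4 * r + 1 / 10 ^ 8) := (abs_add_le _ _).trans (by gcongr)
    _ = slopeBound q r := by rw [cast_bound, add_assoc]

theorem abs_helixMap_sub_le (b : ℝ) {q r : ℚ} {x y : ℝ} (hx : |x - q| ≤ r) (hy : |y - q| ≤ r) :
    |helixMap b x - helixMap b y| ≤ slopeBound q r * |x - y| :=
  (convex_closedBall (q : ℝ) r).norm_image_sub_le_of_norm_hasDerivWithin_le
    (fun z _ => (hasDerivAt_helixMap b z).hasDerivWithinAt)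
    (fun _ hz => abs_deriv_helixMap_le_slopeBound hz) hy hx

end HelixMap

/-- Rounding up to ten decimal places. It keeps the rational numbers of a long validated
computation small. -/
def roundUp (x : ℚ) : ℚ := ⌈x * 10 ^ 10⌉ / 10 ^ 10

theorem le_roundUp (x : ℚ) : x ≤ roundUp x := by
  rw [roundUp, le_div_iff₀ (by positivity)]
  exact Int.le_ceil _

theorem abs_sub_roundUp_le (x : ℚ) : |x - roundUp x| ≤ 1 / 10 ^ 10 := by
  have upper : roundUp x ≤ x + 1 / 10 ^ 10 := by
    rw [roundUp, div_le_iff₀ (by positivity), add_mul, one_div_mul_cancel (by positivity)]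
    exact (Int.ceil_lt_add_one _).le
  rw [abs_sub_comm, abs_of_nonneg (sub_nonneg.mpr (le_roundUp x))]
  linarith

/-- The data of a validated computation: a ball known to contain the values of a map, and a
Lipschitz constant of that map. -/
structure Enclosure where
  center : ℚ
  radius : ℚ
  slope : ℚ

namespace Enclosure

/-- The map `g` sends `s` into the ball of `E` and has Lipschitz constant `E.slope` on `s`. -/
def Encloses (E : Enclosure) (g : ℝ → ℝ) (s : Set ℝ) : Prop :=
  (∀ x ∈ s, |g x - E.center| ≤ E.radius) ∧
    ∀ x ∈ s, ∀ y ∈ s, |g x - g y| ≤ E.slope * |x - y|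

/-- The enclosure of the identity map on the closed ball of centre `c` and radius `r`. -/
def ofBall (c r : ℚ) : Enclosure := ⟨c, r, 1⟩

/-- An enclosure of `f_b ∘ g`, computed from an enclosure of `g`. The term `1 / 10 ^ 8` absorbs the
error made in evaluating `f_b` at the centre. -/
def step (b : ℚ) (E : Enclosure) : Enclosure where
  center := roundUp (2 / 5 * sinPiApprox E.center + E.center + b)
  radius := roundUp (slopeBound E.center E.radius * E.radius + 1 / 10 ^ 8)
  slope := roundUp (slopeBound E.center E.radius * E.slope)

variable {E : Enclosure} {g : ℝ → ℝ} {s : Set ℝ}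

theorem encloses_ofBall (c r : ℚ) : (ofBall c r).Encloses id (closedBall (c : ℝ) r) :=
  ⟨fun _ hx => hx, fun x _ y _ => by simp [ofBall]⟩

theorem abs_helixMap_center_sub_le (b : ℚ) (E : Enclosure) :
    |helixMap b E.center - (E.step b).center| ≤ 1 / 10 ^ 8 := by
  have sin_error := abs_sin_pi_mul_sub_sinPiApprox_le E.center
  have round_error := (Rat.cast_le (K := ℝ)).mpr <|
    abs_sub_roundUp_le (2 / 5 * sinPiApprox E.center + E.center + b)
  push_cast at round_error
  rw [abs_le] at sin_error round_error ⊢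
  rw [helixMap, step]
  constructor <;> linarith

theorem Encloses.step (b : ℚ) (h : E.Encloses g s) :
    (E.step b).Encloses (helixMap b ∘ g) s := by
  have slope_nonneg {x : ℝ} (hx : x ∈ s) : (0 : ℝ) ≤ slopeBound E.center E.radius := by
    exact_mod_cast slopeBound_nonneg (by exact_mod_cast (abs_nonneg _).trans (h.1 x hx))
  refine ⟨fun x hx => ?_, fun x hx y hy => ?_⟩
  · have center_mem : |(E.center : ℝ) - E.center| ≤ E.radius := by
      simpa using (abs_nonneg _).trans (h.1 x hx)
    calc |helixMap b (g x) - (E.step b).center|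
        ≤ |helixMap b (g x) - helixMap b E.center| + |helixMap b E.center - (E.step b).center| :=
          abs_sub_le _ _ _
      _ ≤ slopeBound E.center E.radius * |g x - E.center| + 1 / 10 ^ 8 :=
          add_le_add (abs_helixMap_sub_le b (h.1 x hx) center_mem) (abs_helixMap_center_sub_le b E)
      _ ≤ slopeBound E.center E.radius * E.radius + 1 / 10 ^ 8 := by
          gcongr
          exacts [slope_nonneg hx, h.1 x hx]
      _ ≤ (E.step b).radius := by
          have h := (Rat.cast_le (K := ℝ)).mpr <|
            le_roundUp (slopeBound E.center E.radius * E.radius + 1 / 10 ^ 8)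
          push_cast at h
          exact h
  · calc |helixMap b (g x) - helixMap b (g y)|
        ≤ slopeBound E.center E.radius * |g x - g y| :=
          abs_helixMap_sub_le b (h.1 x hx) (h.1 y hy)
      _ ≤ slopeBound E.center E.radius * (E.slope * |x - y|) := by
          gcongr
          exacts [slope_nonneg hx, h.2 x hx y hy]
      _ = (slopeBound E.center E.radius * E.slope : ℚ) * |x - y| := by push_cast; ring
      _ ≤ (E.step b).slope * |x - y| := by
          gcongr
          exact_mod_cast le_roundUp _

theorem Encloses.iterate_step (b : ℚ) (h : E.Encloses g s) (n : ℕ) :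
    ((Enclosure.step b)^[n] E).Encloses ((helixMap b)^[n] ∘ g) s := by
  induction n with
  | zero => exact h
  | succ n ih =>
    rw [iterate_succ_apply', iterate_succ', comp_assoc]
    exact ih.step b

theorem Encloses.mapsTo_sub (h : E.Encloses g s) {m c r : ℚ}
    (hr : |E.center - m - c| + E.radius ≤ r) :
    MapsTo (fun x => g x - m) s (closedBall (c : ℝ) r) := by
  intro x hx
  have hr' : |(E.center : ℝ) - m - c| + E.radius ≤ r := by exact_mod_cast hr
  rw [mem_closedBall, Real.dist_eq]
  calc |g x - m - c| = |(g x - E.center) + (E.center - m - c)| := by ring_nf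
    _ ≤ E.radius + |(E.center : ℝ) - m - c| := (abs_add_le _ _).trans (by gcongr; exact h.1 x hx)
    _ ≤ r := by linarith

end Enclosure

open Enclosure

/-- A finite computation certifying that the `f_b`-orbit of `a` is attracted by a helix of period
`p` and modulo `2 j`: the return map contracts the closed ball of centre `c` and radius `r`, and
its `N`-th iterate sends `a` into this ball. -/
def IsHelixCertificate (a b c r : ℚ) (j : ℤ) (p N : ℕ) : Prop :=
  |((step b)^[p * N] (ofBall a 0)).center - N * (2 * j) - c|
      + ((step b)^[p * N] (ofBall a 0)).radius ≤ r ∧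
    |((step b)^[p] (ofBall c r)).center - 2 * j - c| + ((step b)^[p] (ofBall c r)).radius ≤ r ∧
    ((step b)^[p] (ofBall c r)).slope < 1

theorem IsHelixCertificate.exists_attracting_helix {a b c r : ℚ} {j : ℤ} {p N : ℕ}
    (h : IsHelixCertificate a b c r j p N) :
    ∃ x, (∀ n, (helixMap b)^[n + p] x = (helixMap b)^[n] x + 2 * j) ∧
      Tendsto (fun n => (helixMap b)^[n] a - (helixMap b)^[n] x) atTop (𝓝 0) := by
  obtain ⟨hreach, hself, hcontr⟩ := h
  have hp : p ≠ 0 := by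
    rintro rfl
    exact absurd hcontr (lt_irrefl _)
  have hcomm (y : ℝ) := helixMap_add_two_mul_int b y j
  have encl := (encloses_ofBall c r).iterate_step b p
  set g := returnMap (helixMap b) p (2 * j) with hg
  have maps : MapsTo g (closedBall (c : ℝ) r) (closedBall c r) := by
    simpa [hg, returnMap, MapsTo] using encl.mapsTo_sub hself
  have start : g^[N] a ∈ closedBall (c : ℝ) r := by
    have h := ((encloses_ofBall a 0).iterate_step b (p * N)).mapsTo_sub hreach
      (mem_closedBall_self (by simp))
    rw [hg, returnMap_iterate hcomm]
    simpa using h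
  have contr : ∀ x ∈ closedBall (c : ℝ) r, ∀ y ∈ closedBall (c : ℝ) r,
      dist (g x) (g y) ≤ ((step b)^[p] (ofBall c r)).slope * dist x y := by
    simpa [hg, returnMap, Real.dist_eq] using encl.2
  obtain ⟨x, hfix, hlim⟩ := exists_isFixedPt_tendsto_iterate_of_mapsTo isClosed_closedBall maps
    (by exact_mod_cast hcontr) contr start
  simp only [← iterate_add_apply] at hlim
  exact ⟨x, iterate_add_eq_of_isFixedPt_returnMap hcomm hfix,
    tendsto_iterate_sub_iterate_of_tendsto_returnMap (continuous_helixMap b) hcomm hp hfix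
      ((tendsto_add_atTop_iff_nat N).mp hlim)⟩

theorem isHelixCertificate_four_fifths :
    IsHelixCertificate (1 / 2) (4 / 5) (60274 / 10 ^ 6) (4 / 10 ^ 4) 4 10 10 := by
  unfold IsHelixCertificate
  decide +kernel

theorem exists_attracting_helix_four_fifths :
    ∃ x, (∀ n, (helixMap 0.8)^[n + 10] x = (helixMap 0.8)^[n] x + 8) ∧
      Tendsto (fun n => (helixMap 0.8)^[n] 0.5 - (helixMap 0.8)^[n] x) atTop (𝓝 0) := by
  have h := isHelixCertificate_four_fifths.exists_attracting_helix
  have b_cast : ((4 / 5 : ℚ) : ℝ) = 0.8 := by norm_num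
  have a_cast : ((1 / 2 : ℚ) : ℝ) = 0.5 := by norm_num
  have m_cast : 2 * ((4 : ℤ) : ℝ) = 8 := by norm_num
  rwa [b_cast, a_cast, m_cast] at h

/-- For `b = 0.8` and initial value `a = 0.5`, the iterated sequence is attracted
by a stable periodic helix of period 10 and modulo 8. -/
theorem attracted_by_helix_period_ten_modulo_eight (u : ℕ → ℝ)
    (h1 : u 1 = 0.5)
    (hrec : ∀ n : ℕ, 1 ≤ n → u (n + 1) = 0.4 * Real.sin (Real.pi * u n) + u n + 0.8) :
    ∃ v : ℕ → ℝ, (∀ n : ℕ, 1 ≤ n → v (n + 10) = v n + 8) ∧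
      Tendsto (fun n => u n - v n) atTop (nhds 0) := by
  obtain ⟨x, hper, hlim⟩ := exists_attracting_helix_four_fifths
  have orbit (n : ℕ) : u (n + 1) = (helixMap 0.8)^[n] 0.5 := by
    induction n with
    | zero => exact h1
    | succ n ih => rw [hrec (n + 1) n.succ_pos, iterate_succ_apply', ← ih, helixMap]
  refine ⟨fun n => (helixMap 0.8)^[n - 1] x, fun n hn => ?_, ?_⟩
  · obtain ⟨k, rfl⟩ := Nat.exists_eq_add_of_le' hn
    exact hper k
  · rw [← tendsto_add_atTop_iff_nat 1]
    simpa only [orbit, Nat.add_sub_cancel] using hlim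
end

section
/- Let b = 0.7 and a = 0.8, so u(1) = 0.8 and u(n+1) = 0.4·sin(π·u(n)) + u(n) + 0.7 for all n ≥ 1. Then there exists a sequence v : ℕ → ℝ with v(n+3) = v(n) + 2 for all n ≥ 1 such that u(n) − v(n) → 0 as n → ∞; that is, u is attracted by a stable periodic helix of period 3 and modulo 2. -/
open Filter

/-!
The map `f x = 0.4 * sin (π * x) + x + 0.7` commutes with `x ↦ x + 2`, so a fixed point `y` of
`g x = f^[3] x - 2` generates the helix `n ↦ f^[n] y`, of period `3` and modulo `2`. The interval
`[0.069, 0.141]` is mapped into itself by `g`, following an orbit that passes near `0`, `1` and `2`,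
where `f` is increasing, decreasing and increasing. The derivative of `g` is the product of three
derivatives of `f`, of about `2`, `-1/4` and `2`. Bounding each factor by its maximum over the whole
interval is too crude, but after splitting the interval at `0.1125` the same estimate gives
`|g'| ≤ 0.996`. Thus `g` is a contraction and the helix attracts every orbit that enters the
interval modulo `2`; the third term of `u` has done so.
-/

open Set Topology
open scoped Real NNReal AddConstMap

/-- A periodic helix with period `j` and modulo `m`, valued in any additive structure. Indices start
at `1`, so the value of `v` at `0` is unconstrained. -/
def IsPeriodicHelix {E : Type*} [Add E] (j : ℕ) (m : E) (v : ℕ → E) : Prop :=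
  ∀ n : ℕ, 1 ≤ n → v (n + j) = v n + m

theorem eq_iterate_of_recurrence {α : Type*} {f : α → α} {u : ℕ → α} {N : ℕ}
    (hu : ∀ n, N ≤ n → u (n + 1) = f (u n)) (n : ℕ) : u (n + N) = f^[n] (u N) := by
  induction n with
  | zero => simp
  | succ n ih => rw [Nat.succ_add, hu _ (Nat.le_add_left N n), ih, Function.iterate_succ_apply']

section Helix

variable {E : Type*} [NormedAddCommGroup E] {m : E} {f : E →+c[m, m] E} {j : ℕ}

theorem iterate_add_zsmul_const (f : E →+c[m, m] E) (n : ℕ) (x : E) (k : ℤ) :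
    f^[n] (x + k • m) = f^[n] x + k • m :=
  AddConstMapClass.map_add_zsmul (f ^ n) x k

theorem iterate_add_nsmul_const (f : E →+c[m, m] E) (n : ℕ) (x : E) (k : ℕ) :
    f^[n] (x + k • m) = f^[n] x + k • m :=
  AddConstMapClass.map_add_nsmul (f ^ n) x k

theorem iterate_sub_const_iterate (f : E →+c[m, m] E) (j k : ℕ) (x : E) :
    (fun y ↦ f^[j] y - m)^[k] x = f^[j * k] x - k • m := by
  have hcomm : Function.Commute (· - m) f^[j] := fun y ↦
    (AddConstMapClass.map_sub_const (f ^ j) y).symm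
  have hsub : (· - m)^[k] = (· - k • m) := by
    simp only [sub_eq_add_neg, add_right_iterate, smul_neg]
  calc ((· - m) ∘ f^[j])^[k] x = (· - m)^[k] ((f^[j])^[k] x) := by
        rw [hcomm.comp_iterate, Function.comp_apply]
    _ = f^[j * k] x - k • m := by rw [hsub, Function.iterate_mul]

theorem iterate_mul_eq_add_nsmul {y : E} (hy : f^[j] y = y + m) (k : ℕ) :
    f^[j * k] y = y + k • m := by
  rw [← sub_eq_iff_eq_add, ← iterate_sub_const_iterate]
  exact Function.iterate_fixed (by simp [hy]) k

theorem iterate_comm_eq_add {y : E} (hy : f^[j] y = y + m) (n : ℕ) :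
    f^[j] (f^[n] y) = f^[n] y + m := by
  rw [← Function.iterate_add_apply, add_comm, Function.iterate_add_apply, hy]
  exact AddConstMapClass.map_add_const (f ^ n) y

theorem isPeriodicHelix_iterate {y : E} (hy : f^[j] y = y + m) :
    IsPeriodicHelix j m (fun n ↦ f^[n] y) := fun n _ ↦ by
  simp only [add_comm n, Function.iterate_add_apply, iterate_comm_eq_add hy]

theorem exists_iterate_eq_add_zsmul (hj : j ≠ 0) {y : E} (hy : f^[j] y = y + m) (N : ℕ) (k : ℤ) :
    ∃ w, f^[j] w = w + m ∧ f^[N] w = y + k • m := by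
  have hmul : N + (j * N - N) = j * N :=
    Nat.add_sub_cancel' (Nat.le_mul_of_pos_left N (Nat.pos_of_ne_zero hj))
  refine ⟨f^[j * N - N] y + (k - N) • m, ?_, ?_⟩
  · rw [iterate_add_zsmul_const, iterate_comm_eq_add hy, add_right_comm]
  · rw [iterate_add_zsmul_const, ← Function.iterate_add_apply, hmul, iterate_mul_eq_add_nsmul hy,
      sub_zsmul, natCast_zsmul]
    abel

theorem tendsto_iterate_sub_iterate (hf : Continuous f) (hj : j ≠ 0) {x y : E}
    (hy : f^[j] y = y + m) (hxy : Tendsto (fun k : ℕ ↦ f^[j * k] x - k • m) atTop (𝓝 y)) :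
    Tendsto (fun n ↦ f^[n] x - f^[n] y) atTop (𝓝 0) := by
  set g : ℕ → E := fun k ↦ f^[j * k] x - k • m
  have hsplit (n : ℕ) : f^[n] x - f^[n] y = f^[n % j] (g (n / j)) - f^[n % j] y := by
    have hx : f^[j * (n / j)] x = g (n / j) + (n / j) • m := (sub_add_cancel _ _).symm
    conv_lhs => rw [← Nat.mod_add_div n j]
    simp only [Function.iterate_add_apply, iterate_mul_eq_add_nsmul hy, hx,
      iterate_add_nsmul_const, add_sub_add_right_eq_sub]
  have hterm (i : ℕ) : Tendsto (fun n ↦ ‖f^[i] (g (n / j)) - f^[i] y‖) atTop (𝓝 0) := by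
    have hlim := ((hf.iterate i).tendsto y).comp (hxy.comp (Nat.tendsto_div_const_atTop hj))
    exact tendsto_iff_norm_sub_tendsto_zero.1 hlim
  have hsum := tendsto_finsetSum (Finset.range j) fun i _ ↦ hterm i
  rw [Finset.sum_const_zero] at hsum
  refine squeeze_zero_norm (fun n ↦ ?_) hsum
  rw [hsplit]
  exact Finset.single_le_sum (f := fun i ↦ ‖f^[i] (g (n / j)) - f^[i] y‖)
    (fun i _ ↦ norm_nonneg _) (Finset.mem_range.2 (Nat.mod_lt n (Nat.pos_of_ne_zero hj)))

theorem exists_forall_tendsto_iterate_sub_iterate (hf : Continuous f) (hj : j ≠ 0) {S : Set E}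
    (hS : IsComplete S) (hne : S.Nonempty) (hmaps : MapsTo (fun x ↦ f^[j] x - m) S S) {K : ℝ≥0}
    (hK : K < 1) (hlip : LipschitzOnWith K f^[j] S) :
    ∃ y, f^[j] y = y + m ∧ ∀ x ∈ S, Tendsto (fun n ↦ f^[n] x - f^[n] y) atTop (𝓝 0) := by
  have : CompleteSpace S := hS.completeSpace_coe
  have : Nonempty S := hne.to_subtype
  have hlip' : LipschitzOnWith K (fun x ↦ f^[j] x - m) S := fun x hx y hy ↦ by
    simpa only [edist_sub_right] using hlip hx hy
  have hcontr : ContractingWith K (hmaps.restrict _ S S) := ⟨hK, hlip'.mapsToRestrict hmaps⟩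
  obtain ⟨y, hy⟩ : ∃ y, y = ContractingWith.fixedPoint _ hcontr := ⟨_, rfl⟩
  have hfix : f^[j] (y : E) = y + m := sub_eq_iff_eq_add.1 <| congrArg Subtype.val <|
    (hy ▸ hcontr.fixedPoint_isFixedPt : Function.IsFixedPt _ y)
  refine ⟨y, hfix, fun x hx ↦ tendsto_iterate_sub_iterate hf hj hfix ?_⟩
  have hlim := (continuous_subtype_val.tendsto _).comp
    (hcontr.tendsto_iterate_fixedPoint ⟨x, hx⟩)
  rw [← hy] at hlim
  refine hlim.congr fun k ↦ ?_
  rw [Function.comp_apply, MapsTo.iterate_restrict, MapsTo.val_restrict_apply,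
    iterate_sub_const_iterate]

theorem exists_isPeriodicHelix_forall_tendsto (hf : Continuous f) (hj : j ≠ 0) {S : Set E}
    (hS : IsComplete S) (hne : S.Nonempty) (hmaps : MapsTo (fun x ↦ f^[j] x - m) S S) {K : ℝ≥0}
    (hK : K < 1) (hlip : LipschitzOnWith K f^[j] S) (N : ℕ) (k : ℤ) :
    ∃ v : ℕ → E, IsPeriodicHelix j m v ∧ ∀ u : ℕ → E, (∀ n, N ≤ n → u (n + 1) = f (u n)) →
      u N - k • m ∈ S → Tendsto (fun n ↦ u n - v n) atTop (𝓝 0) := by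
  obtain ⟨y, hy, hattr⟩ := exists_forall_tendsto_iterate_sub_iterate hf hj hS hne hmaps hK hlip
  obtain ⟨w, hw, hwN⟩ := exists_iterate_eq_add_zsmul hj hy N k
  refine ⟨fun n ↦ f^[n] w, isPeriodicHelix_iterate hw, fun u hu huN ↦ ?_⟩
  rw [← tendsto_add_atTop_iff_nat N]
  refine (hattr _ huN).congr fun n ↦ ?_
  have huk : f^[n] (u N) = f^[n] (u N - k • m) + k • m := by
    rw [← iterate_add_zsmul_const, sub_add_cancel]
  simp only [eq_iterate_of_recurrence hu, Function.iterate_add_apply, hwN, huk,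
    iterate_add_zsmul_const, add_sub_add_right_eq_sub]

end Helix

theorem hasDerivAt_iterate_prod {𝕜 : Type*} [NontriviallyNormedField 𝕜] {f : 𝕜 → 𝕜}
    (hf : Differentiable 𝕜 f) (n : ℕ) (x : 𝕜) :
    HasDerivAt f^[n] (∏ i ∈ Finset.range n, deriv f (f^[i] x)) x := by
  induction n with
  | zero => simpa using hasDerivAt_id x
  | succ n ih =>
    rw [Finset.prod_range_succ, mul_comm, Function.iterate_succ']
    exact (hf (f^[n] x)).hasDerivAt.comp x ih

theorem sin_le_quintic {x : ℝ} (h0 : 0 ≤ x) (h1 : x ≤ 1) :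
    Real.sin x ≤ x - x ^ 3 / 6 + x ^ 5 / 100 := by
  have hx : |x| = x := abs_of_nonneg h0
  have h := (abs_le.1 (Real.sin_bound (hx.trans_le h1))).2
  rw [hx] at h
  linarith

theorem cos_le_quartic (x : ℝ) : Real.cos x ≤ 1 - x ^ 2 / 2 + x ^ 4 / 24 := by
  rcases le_total (x ^ 2) 12 with hx | hx
  · have hsin : |x| / 2 - (|x| / 2) ^ 3 / 6 ≤ Real.sin (|x| / 2) :=
      Real.sin_ge_sub_cube (by positivity)
    have hnonneg : 0 ≤ |x| / 2 - (|x| / 2) ^ 3 / 6 := by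
      nlinarith [abs_nonneg x, sq_abs x]
    calc Real.cos x = 1 - 2 * Real.sin (|x| / 2) ^ 2 := by
          rw [← Real.cos_abs, ← mul_div_cancel₀ |x| (two_ne_zero' ℝ), mul_div_assoc,
            Real.cos_two_mul, Real.cos_sq']
          ring_nf
      _ ≤ 1 - 2 * (|x| / 2 - (|x| / 2) ^ 3 / 6) ^ 2 := by gcongr
      _ = 1 - x ^ 2 / 2 + x ^ 4 / 24 - (|x| ^ 3) ^ 2 / 1152 := by
          rw [← sq_abs x, ← Even.pow_abs (by decide : Even 4) x]
          ring
      _ ≤ 1 - x ^ 2 / 2 + x ^ 4 / 24 := sub_le_self _ (by positivity)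
  · nlinarith [Real.cos_le_one x]

theorem sin_pi_mul_le {p : ℝ} (h0 : 0 ≤ p) (h1 : p ≤ 0.318) :
    Real.sin (π * p) ≤ 3.1416 * p - (3.1416 * p) ^ 3 / 6 + (3.1416 * p) ^ 5 / 100 := by
  have hpi := Real.pi_lt_d4
  refine le_trans ?_ (sin_le_quintic (by positivity) (by linarith))
  exact Real.sin_le_sin_of_le_of_le_pi_div_two (by nlinarith [Real.pi_pos])
    (by linarith [Real.pi_gt_three]) (by gcongr)

theorem le_sin_pi_mul {p : ℝ} (h0 : 0 ≤ p) (h1 : p ≤ 1 / 2) :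
    3.1415 * p - (3.1415 * p) ^ 3 / 6 ≤ Real.sin (π * p) := by
  have hpi := Real.pi_gt_d4
  refine (Real.sin_ge_sub_cube (by positivity)).trans ?_
  exact Real.sin_le_sin_of_le_of_le_pi_div_two (by linarith [Real.pi_pos]) (by nlinarith)
    (by gcongr)

theorem cos_pi_mul_le {p : ℝ} (h0 : 0 ≤ p) (h1 : p ≤ 1) :
    Real.cos (π * p) ≤ 1 - (3.1415 * p) ^ 2 / 2 + (3.1415 * p) ^ 4 / 24 := by
  have hpi := Real.pi_gt_d4
  refine le_trans ?_ (cos_le_quartic _)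
  exact Real.cos_le_cos_of_nonneg_of_le_pi (by positivity)
    (mul_le_of_le_one_right Real.pi_pos.le h1) (by gcongr)

/-- The map `f_b`, bundled with its commutation with the translation by `2`. -/
noncomputable def sineMap (b : ℝ) : ℝ →+c[2, 2] ℝ where
  toFun x := 0.4 * Real.sin (π * x) + x + b
  map_add_const' x := by
    rw [mul_add, mul_comm π 2, Real.sin_add_two_pi]
    ring

section SineMap

variable (b p : ℝ)

theorem sineMap_apply : sineMap b p = 0.4 * Real.sin (π * p) + p + b := rfl

theorem sineMap_one_sub : sineMap b (1 - p) = 0.4 * Real.sin (π * p) + (1 - p) + b := by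
  rw [sineMap_apply, mul_one_sub, Real.sin_pi_sub]

theorem sineMap_two_sub : sineMap b (2 - p) = -(0.4 * Real.sin (π * p)) + (2 - p) + b := by
  rw [sineMap_apply, mul_sub, mul_comm π 2, Real.sin_two_pi_sub, mul_neg]

theorem hasDerivAt_sineMap :
    HasDerivAt (sineMap b) (1 + 0.4 * (π * Real.cos (π * p))) p := by
  have h := ((((hasDerivAt_id p).const_mul π).sin.const_mul 0.4).add (hasDerivAt_id p)).add_const b
  exact h.congr_deriv (by simp only [id_eq]; ring)

theorem differentiable_sineMap : Differentiable ℝ (sineMap b) := fun x ↦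
  (hasDerivAt_sineMap b x).differentiableAt

theorem deriv_sineMap : deriv (sineMap b) p = 1 + 0.4 * (π * Real.cos (π * p)) :=
  (hasDerivAt_sineMap b p).deriv

theorem deriv_sineMap_one_sub : deriv (sineMap b) (1 - p) = 2 - deriv (sineMap b) p := by
  rw [deriv_sineMap, deriv_sineMap, mul_one_sub, Real.cos_pi_sub]
  ring

theorem deriv_sineMap_two_sub : deriv (sineMap b) (2 - p) = deriv (sineMap b) p := by
  rw [deriv_sineMap, deriv_sineMap, mul_sub, mul_comm π 2, Real.cos_two_pi_sub]

theorem deriv_sineMap_abs : deriv (sineMap b) |p| = deriv (sineMap b) p := by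
  have hcos : Real.cos (π * |p|) = Real.cos (π * p) := by
    rw [← Real.cos_abs (π * p), abs_mul, abs_of_pos Real.pi_pos]
  rw [deriv_sineMap, deriv_sineMap, hcos]

theorem antitoneOn_deriv_sineMap : AntitoneOn (deriv (sineMap b)) (Icc 0 1) := by
  intro x hx y hy hxy
  have hcos : Real.cos (π * y) ≤ Real.cos (π * x) :=
    Real.cos_le_cos_of_nonneg_of_le_pi (mul_nonneg Real.pi_pos.le hx.1)
      (mul_le_of_le_one_right Real.pi_pos.le hy.2) (by gcongr)
  rw [deriv_sineMap, deriv_sineMap]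
  gcongr

variable {p} {x : ℝ}

theorem deriv_sineMap_nonneg (hx : |x| ≤ 1 / 2) : 0 ≤ deriv (sineMap b) x := by
  obtain ⟨hlow, hup⟩ := abs_le.1 hx
  have hpi := Real.pi_pos
  have hcos : 0 ≤ Real.cos (π * x) :=
    Real.cos_nonneg_of_neg_pi_div_two_le_of_le (by nlinarith) (by nlinarith)
  rw [deriv_sineMap]
  positivity

theorem two_le_deriv_sineMap (hx : |x| ≤ 1 / 5) : 2 ≤ deriv (sineMap b) x := by
  have hpi := Real.pi_gt_d4
  have hsq : (π * x) ^ 2 ≤ (3.1416 * (1 / 5)) ^ 2 := by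
    rw [← sq_abs, abs_mul, abs_of_pos Real.pi_pos]
    gcongr
    exact Real.pi_lt_d4.le
  have hcos : 0.8 ≤ Real.cos (π * x) := by
    linarith [Real.one_sub_sq_div_two_le_cos (x := π * x)]
  rw [deriv_sineMap]
  nlinarith

theorem monotoneOn_sineMap_near_zero : MonotoneOn (sineMap b) (Icc (-(1 / 2)) (1 / 2)) := by
  refine monotoneOn_of_deriv_nonneg (convex_Icc _ _)
    (differentiable_sineMap b).continuous.continuousOn (differentiable_sineMap b).differentiableOn
    fun x hx ↦ ?_
  obtain ⟨hlow, hup⟩ := interior_subset hx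
  exact deriv_sineMap_nonneg b (abs_le.2 ⟨hlow, hup⟩)

theorem antitoneOn_sineMap_near_one : AntitoneOn (sineMap b) (Icc (4 / 5) (6 / 5)) := by
  refine antitoneOn_of_deriv_nonpos (convex_Icc _ _)
    (differentiable_sineMap b).continuous.continuousOn (differentiable_sineMap b).differentiableOn
    fun x hx ↦ ?_
  obtain ⟨hlow, hup⟩ := interior_subset hx
  have htwo_le := two_le_deriv_sineMap b (x := 1 - x) (abs_le.2 ⟨by linarith, by linarith⟩)
  rw [deriv_sineMap_one_sub] at htwo_le
  linarith

theorem monotoneOn_sineMap_near_two : MonotoneOn (sineMap b) (Icc (3 / 2) (5 / 2)) := by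
  refine monotoneOn_of_deriv_nonneg (convex_Icc _ _)
    (differentiable_sineMap b).continuous.continuousOn (differentiable_sineMap b).differentiableOn
    fun x hx ↦ ?_
  obtain ⟨hlow, hup⟩ := interior_subset hx
  rw [← deriv_sineMap_two_sub]
  exact deriv_sineMap_nonneg b (abs_le.2 ⟨by linarith, by linarith⟩)

theorem abs_deriv_sineMap_near_zero_le (hp : 0 ≤ p) (hx : |x| ∈ Icc p (1 / 2)) :
    |deriv (sineMap b) x| ≤ deriv (sineMap b) p := by
  obtain ⟨hpx, hx⟩ := hx
  rw [abs_of_nonneg (deriv_sineMap_nonneg b hx), ← deriv_sineMap_abs b x]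
  exact antitoneOn_deriv_sineMap b ⟨hp, by linarith⟩ ⟨abs_nonneg x, by linarith⟩ hpx

theorem abs_deriv_sineMap_near_one_le (hp : 0 ≤ p) (hx : |1 - x| ∈ Icc p (1 / 5)) :
    |deriv (sineMap b) x| ≤ deriv (sineMap b) p - 2 := by
  have hreflect : deriv (sineMap b) x = 2 - deriv (sineMap b) (1 - x) := by
    rw [deriv_sineMap_one_sub, sub_sub_cancel]
  have hle := abs_deriv_sineMap_near_zero_le b hp ⟨hx.1, hx.2.trans (by norm_num)⟩
  rw [hreflect, abs_sub_comm, abs_of_nonneg (sub_nonneg.2 (two_le_deriv_sineMap b hx.2))]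
  linarith [le_abs_self (deriv (sineMap b) (1 - x))]

theorem abs_deriv_sineMap_near_two_le (hp : 0 ≤ p) (hx : |2 - x| ∈ Icc p (1 / 2)) :
    |deriv (sineMap b) x| ≤ deriv (sineMap b) p := by
  rw [← deriv_sineMap_two_sub]
  exact abs_deriv_sineMap_near_zero_le b hp hx

theorem deriv_sineMap_le (h0 : 0 ≤ p) (h1 : p ≤ 1 / 2) : deriv (sineMap b) p ≤
    1 + 0.4 * (3.1416 * (1 - (3.1415 * p) ^ 2 / 2 + (3.1415 * p) ^ 4 / 24)) := by
  have hpi := Real.pi_pos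
  have hcos : 0 ≤ Real.cos (π * p) :=
    Real.cos_nonneg_of_neg_pi_div_two_le_of_le (by nlinarith) (by nlinarith)
  rw [deriv_sineMap]
  gcongr
  · exact Real.pi_lt_d4.le
  · exact cos_pi_mul_le h0 (by linarith)

theorem deriv_sineMap_iterate_three : deriv (sineMap b)^[3] x = deriv (sineMap b) x *
    deriv (sineMap b) (sineMap b x) * deriv (sineMap b) (sineMap b (sineMap b x)) := by
  rw [(hasDerivAt_iterate_prod (differentiable_sineMap b) 3 x).deriv]
  simp only [Finset.prod_range_succ, Finset.prod_range_zero, one_mul, Function.iterate_succ_apply,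
    Function.iterate_zero_apply]

theorem abs_deriv_sineMap_iterate_three_le {p q r P Q R : ℝ} (hp : 0 ≤ p) (hq : 0 ≤ q)
    (hr : 0 ≤ r) (hx : |x| ∈ Icc p (1 / 2)) (hx₁ : |1 - sineMap b x| ∈ Icc q (1 / 5))
    (hx₂ : |2 - sineMap b (sineMap b x)| ∈ Icc r (1 / 2)) (hP : deriv (sineMap b) p ≤ P)
    (hQ : deriv (sineMap b) q ≤ Q) (hR : deriv (sineMap b) r ≤ R) :
    |deriv (sineMap b)^[3] x| ≤ P * (Q - 2) * R := by
  have hzero := (abs_deriv_sineMap_near_zero_le b hp hx).trans hP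
  have hone := (abs_deriv_sineMap_near_one_le b hq hx₁).trans (sub_le_sub_right hQ 2)
  have htwo := (abs_deriv_sineMap_near_two_le b hr hx₂).trans hR
  have hP_nonneg := (abs_nonneg _).trans hzero
  have hQ_nonneg := (abs_nonneg _).trans hone
  rw [deriv_sineMap_iterate_three, abs_mul, abs_mul]
  gcongr

end SineMap

theorem mapsTo_sineMap_near_zero : MapsTo (sineMap 0.7) (Icc 0.069 0.141) (Icc 0.8 1.0125) := by
  have hmono := (monotoneOn_sineMap_near_zero 0.7).mono
    (Icc_subset_Icc (by norm_num : (-(1 / 2) : ℝ) ≤ 0.069) (by norm_num : (0.141 : ℝ) ≤ 1 / 2))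
  refine hmono.mapsTo_Icc.mono_right (Icc_subset_Icc ?_ ?_)
  · have hsin := le_sin_pi_mul (p := 0.069) (by norm_num) (by norm_num)
    rw [sineMap_apply]
    linarith
  · have hsin := sin_pi_mul_le (p := 0.141) (by norm_num) (by norm_num)
    rw [sineMap_apply]
    linarith

theorem mapsTo_sineMap_near_one :
    MapsTo (sineMap 0.7) (Icc 0.8 1.0125) (Icc 1.6965 1.7352) := by
  have hanti := (antitoneOn_sineMap_near_one 0.7).mono
    (Icc_subset_Icc (by norm_num : (4 / 5 : ℝ) ≤ 0.8) (by norm_num : (1.0125 : ℝ) ≤ 6 / 5))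
  refine hanti.mapsTo_Icc.mono_right (Icc_subset_Icc ?_ ?_)
  · have hsin := sin_pi_mul_le (p := 0.0125) (by norm_num) (by norm_num)
    have heq : sineMap 0.7 1.0125 = 1.7125 - 0.4 * Real.sin (π * 0.0125) := by
      rw [show (1.0125 : ℝ) = 1 - -0.0125 by norm_num, sineMap_one_sub, mul_neg, Real.sin_neg]
      ring
    rw [heq]
    linarith
  · have hsin := sin_pi_mul_le (p := 0.2) (by norm_num) (by norm_num)
    rw [show (0.8 : ℝ) = 1 - 0.2 by norm_num, sineMap_one_sub]
    linarith

theorem mapsTo_sineMap_near_two :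
    MapsTo (sineMap 0.7) (Icc 1.6965 1.7352) (Icc 2.069 2.141) := by
  have hmono := (monotoneOn_sineMap_near_two 0.7).mono
    (Icc_subset_Icc (by norm_num : (3 / 2 : ℝ) ≤ 1.6965) (by norm_num : (1.7352 : ℝ) ≤ 5 / 2))
  refine hmono.mapsTo_Icc.mono_right (Icc_subset_Icc ?_ ?_)
  · have hsin := sin_pi_mul_le (p := 0.3035) (by norm_num) (by norm_num)
    rw [show (1.6965 : ℝ) = 2 - 0.3035 by norm_num, sineMap_two_sub]
    linarith
  · have hsin := le_sin_pi_mul (p := 0.2648) (by norm_num) (by norm_num)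
    rw [show (1.7352 : ℝ) = 2 - 0.2648 by norm_num, sineMap_two_sub]
    linarith

theorem mapsTo_sineMap_iterate_three_sub :
    MapsTo (fun x ↦ (sineMap 0.7)^[3] x - 2) (Icc 0.069 0.141) (Icc 0.069 0.141) := by
  intro x hx
  obtain ⟨hlow, hup⟩ :=
    mapsTo_sineMap_near_two (mapsTo_sineMap_near_one (mapsTo_sineMap_near_zero hx))
  constructor <;> simp only [Function.iterate_succ_apply, Function.iterate_zero_apply] <;> linarith

theorem abs_deriv_sineMap_iterate_three_le_of_left {x : ℝ} (hx : x ∈ Icc (0.069 : ℝ) 0.1125) :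
    |deriv (sineMap 0.7)^[3] x| ≤ 0.996 := by
  obtain ⟨hlow, hup⟩ := hx
  have hx₁ := mapsTo_sineMap_near_zero ⟨hlow, by linarith⟩
  obtain ⟨hlow₂, hup₂⟩ := mapsTo_sineMap_near_one hx₁
  have hup₁ : sineMap 0.7 x ≤ 0.951 := by
    have hsin := sin_pi_mul_le (p := 0.1125) (by norm_num) (by norm_num)
    calc sineMap 0.7 x ≤ sineMap 0.7 0.1125 := monotoneOn_sineMap_near_zero 0.7
          ⟨by linarith, by linarith⟩ ⟨by norm_num, by norm_num⟩ hup
      _ ≤ 0.951 := by rw [sineMap_apply]; linarith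
  have hP : deriv (sineMap 0.7) 0.069 ≤ 2.2273 :=
    (deriv_sineMap_le 0.7 (by norm_num) (by norm_num)).trans (by norm_num)
  have hQ : deriv (sineMap 0.7) 0.049 ≤ 2.2418 :=
    (deriv_sineMap_le 0.7 (by norm_num) (by norm_num)).trans (by norm_num)
  have hR : deriv (sineMap 0.7) 0.2648 ≤ 1.847 :=
    (deriv_sineMap_le 0.7 (by norm_num) (by norm_num)).trans (by norm_num)
  calc |deriv (sineMap 0.7)^[3] x|
      ≤ 2.2273 * (2.2418 - 2) * 1.847 := by
        refine abs_deriv_sineMap_iterate_three_le 0.7 (by norm_num) (by norm_num) (by norm_num)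
          ⟨?_, ?_⟩ ⟨?_, ?_⟩ ⟨?_, ?_⟩ hP hQ hR <;> simp only [le_abs, abs_le]
        · left; linarith
        · constructor <;> linarith
        · left; linarith
        · constructor <;> linarith [hx₁.1]
        · left; linarith
        · constructor <;> linarith
    _ ≤ 0.996 := by norm_num

theorem abs_deriv_sineMap_iterate_three_le_of_right {x : ℝ} (hx : x ∈ Icc (0.1125 : ℝ) 0.141) :
    |deriv (sineMap 0.7)^[3] x| ≤ 0.996 := by
  obtain ⟨hlow, hup⟩ := hx
  have hx₁ := mapsTo_sineMap_near_zero ⟨by linarith, hup⟩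
  obtain ⟨hlow₂, -⟩ := mapsTo_sineMap_near_one hx₁
  have hlow₁ : 0.9509 ≤ sineMap 0.7 x := by
    have hsin := le_sin_pi_mul (p := 0.1125) (by norm_num) (by norm_num)
    calc 0.9509 ≤ sineMap 0.7 0.1125 := by rw [sineMap_apply]; linarith
      _ ≤ sineMap 0.7 x := monotoneOn_sineMap_near_zero 0.7
          ⟨by norm_num, by norm_num⟩ ⟨by linarith, by linarith⟩ hlow
  have hup₂ : sineMap 0.7 (sineMap 0.7 x) ≤ 1.7124 := by
    have hsin := sin_pi_mul_le (p := 0.0491) (by norm_num) (by norm_num)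
    calc sineMap 0.7 (sineMap 0.7 x) ≤ sineMap 0.7 (1 - 0.0491) :=
          antitoneOn_sineMap_near_one 0.7 ⟨by norm_num, by norm_num⟩
            ⟨by linarith, by linarith [hx₁.2]⟩ (by linarith)
      _ ≤ 1.7124 := by rw [sineMap_one_sub]; linarith
  have hP : deriv (sineMap 0.7) 0.1125 ≤ 2.179 :=
    (deriv_sineMap_le 0.7 (by norm_num) (by norm_num)).trans (by norm_num)
  have hQ : deriv (sineMap 0.7) 0 ≤ 2.25665 :=
    (deriv_sineMap_le 0.7 (by norm_num) (by norm_num)).trans (by norm_num)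
  have hR : deriv (sineMap 0.7) 0.2876 ≤ 1.7787 :=
    (deriv_sineMap_le 0.7 (by norm_num) (by norm_num)).trans (by norm_num)
  calc |deriv (sineMap 0.7)^[3] x|
      ≤ 2.179 * (2.25665 - 2) * 1.7787 := by
        refine abs_deriv_sineMap_iterate_three_le 0.7 (by norm_num) le_rfl (by norm_num)
          ⟨?_, ?_⟩ ⟨abs_nonneg _, ?_⟩ ⟨?_, ?_⟩ hP hQ hR <;> simp only [le_abs, abs_le]
        · left; linarith
        · constructor <;> linarith
        · constructor <;> linarith [hx₁.2]
        · left; linarith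
        · constructor <;> linarith
    _ ≤ 0.996 := by norm_num

theorem lipschitzOnWith_sineMap_iterate_three :
    LipschitzOnWith 0.996 (sineMap 0.7)^[3] (Icc 0.069 0.141) := by
  refine (convex_Icc _ _).lipschitzOnWith_of_nnnorm_deriv_le
    (fun x _ ↦ (differentiable_sineMap 0.7).iterate 3 x) fun x hx ↦ ?_
  rw [← NNReal.coe_le_coe, coe_nnnorm, Real.norm_eq_abs]
  push_cast
  rcases le_total x 0.1125 with hleft | hright
  · exact abs_deriv_sineMap_iterate_three_le_of_left ⟨hx.1, hleft⟩
  · exact abs_deriv_sineMap_iterate_three_le_of_right ⟨hright, hx.2⟩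

theorem attracted_by_helix_period_three_modulo_two_general :
    ∃ v : ℕ → ℝ, IsPeriodicHelix 3 2 v ∧ ∀ u : ℕ → ℝ, u 1 ∈ Icc (0.8 : ℝ) 1.0125 →
      (∀ n : ℕ, 1 ≤ n → u (n + 1) = 0.4 * Real.sin (Real.pi * u n) + u n + 0.7) →
        Tendsto (fun n => u n - v n) atTop (nhds 0) := by
  obtain ⟨v, hv, hattr⟩ := exists_isPeriodicHelix_forall_tendsto
    (differentiable_sineMap 0.7).continuous three_ne_zero isClosed_Icc.isComplete
    (nonempty_Icc.2 (by norm_num)) mapsTo_sineMap_iterate_three_sub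
    (by rw [← NNReal.coe_lt_coe]; norm_num) lipschitzOnWith_sineMap_iterate_three 3 1
  refine ⟨v, hv, fun u hu hrec ↦ hattr u (fun n hn ↦ hrec n (by lia)) ?_⟩
  have hu₂ : u 2 = sineMap 0.7 (u 1) := hrec 1 le_rfl
  have hu₃ : u 3 = sineMap 0.7 (u 2) := hrec 2 one_le_two
  obtain ⟨hlow, hup⟩ := mapsTo_sineMap_near_two (mapsTo_sineMap_near_one hu)
  rw [hu₃, hu₂, one_smul]
  constructor <;> linarith

/-- For `b = 0.7` and initial value `a = 0.8`, the iterated sequence is attracted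
by a stable periodic helix of period 3 and modulo 2. -/
theorem attracted_by_helix_period_three_modulo_two (u : ℕ → ℝ)
    (h1 : u 1 = 0.8)
    (hrec : ∀ n : ℕ, 1 ≤ n → u (n + 1) = 0.4 * Real.sin (Real.pi * u n) + u n + 0.7) :
    ∃ v : ℕ → ℝ, (∀ n : ℕ, 1 ≤ n → v (n + 3) = v n + 2) ∧
      Tendsto (fun n => u n - v n) atTop (nhds 0) := by
  obtain ⟨v, hv, hattr⟩ := attracted_by_helix_period_three_modulo_two_general
  exact ⟨v, hv, hattr u (by norm_num [h1]) hrec⟩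
end
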